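/- arXiv:1603.05944 — 2 statements merged into one kernel-verified Lean document; each statement's English description precedes it below -/
import Mathlib

section
/- Let G be a finite connected simple graph with maximum degree δ and diameter d, and let w be a walk on G following the LFV-v policy. For any time t ∈ ℕ, if some vertex v of G is still unvisited at time t (that is, w(t') ≠ v for all t' ≤ t), then every vertex u of G satisfies freq_w(u,t) ≤ (δ+1)^d. (This is the paper's bound of order δ^d on the highest visit frequency of any node while some node remains unvisited under LFV-v.) -/
/-!
The walk leaves `x` after each of its visits. At such a time `s ≤ t`, the policy picks a next vertex
visited at most as often as any given neighbour `y` of `x`, so at most `F = freq (y, t)` times. The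
next vertex together with its visit count at time `s` determines `s`, since the step to it raises
that count. Hence `freq (x, t) ≤ deg x * (F + 1)`, so that `freq + 1` grows by a factor of at most
`δ + 1` across an edge, and the bound follows along a shortest path to an unvisited vertex.
-/

section

variable {V : Type*} {G : SimpleGraph V} {w : ℕ → V}

/-- The visit count `freq_w(v, t)`. Time `t` itself is included. -/
noncomputable def visitCount (w : ℕ → V) (v : V) (t : ℕ) : ℕ :=
  {t' : ℕ | t' ≤ t ∧ w t' = v}.ncard

theorem visitCount_eq_count [DecidableEq V] (w : ℕ → V) (v : V) (t : ℕ) :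
    visitCount w v t = Nat.count (w · = v) (t + 1) := by
  rw [visitCount, Nat.count_eq_card_filter_range, ← Set.ncard_coe_finset]
  simp

theorem visitCount_mono (w : ℕ → V) (v : V) : Monotone (visitCount w v) := by
  classical
  intro s t hst
  simpa only [visitCount_eq_count] using Nat.count_monotone _ (Nat.succ_le_succ hst)

theorem visitCount_eq_zero {v : V} {t : ℕ} (hv : ∀ t' ≤ t, w t' ≠ v) : visitCount w v t = 0 := by
  classical
  simpa [visitCount_eq_count, Nat.count_iff_forall_not] using hv

theorem injective_next_visitCount (w : ℕ → V) :
    Function.Injective fun s ↦ (w (s + 1), visitCount w (w (s + 1)) s) := by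
  classical
  intro r s hrs
  obtain ⟨hnext, hcount⟩ := Prod.mk.inj hrs
  rw [hnext, visitCount_eq_count, visitCount_eq_count] at hcount
  exact Nat.succ_injective (Nat.count_injective (p := (w · = w (s + 1))) hnext rfl hcount)

/-- Walks on `G` following the LFV-v policy: every step goes to a neighbour whose visit count is
least among the neighbours of the current vertex. -/
structure IsLFVWalk (G : SimpleGraph V) (w : ℕ → V) : Prop where
  adj_succ : ∀ t, G.Adj (w t) (w (t + 1))
  visitCount_succ_le : ∀ t u, G.Adj (w t) u → visitCount w (w (t + 1)) t ≤ visitCount w u t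

namespace IsLFVWalk

theorem visitCount_le_degree_mul (hw : IsLFVWalk G w) {x y : V} [Fintype (G.neighborSet x)]
    (hxy : G.Adj x y) (t : ℕ) :
    visitCount w x t ≤ G.degree x * (visitCount w y t + 1) := by
  let nextVisits : Finset (V × ℕ) := G.neighborFinset x ×ˢ Finset.range (visitCount w y t + 1)
  have maps_to : ∀ s ∈ {s | s ≤ t ∧ w s = x},
      (w (s + 1), visitCount w (w (s + 1)) s) ∈ (nextVisits : Set (V × ℕ)) := by
    rintro s ⟨hst, rfl⟩
    have hle : visitCount w (w (s + 1)) s ≤ visitCount w y t :=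
      (hw.visitCount_succ_le s y hxy).trans (visitCount_mono w y hst)
    simpa [nextVisits] using And.intro (hw.adj_succ s) hle
  calc visitCount w x t
      ≤ (nextVisits : Set (V × ℕ)).ncard :=
        Set.ncard_le_ncard_of_injOn _ maps_to (injective_next_visitCount w).injOn
    _ = G.degree x * (visitCount w y t + 1) := by
        rw [Set.ncard_coe_finset, Finset.card_product, G.card_neighborFinset_eq_degree,
          Finset.card_range]

theorem visitCount_add_one_le_pow_length_mul [G.LocallyFinite] (hw : IsLFVWalk G w) {δ : ℕ}
    (hδ : ∀ x, G.degree x ≤ δ) (t : ℕ) {u v : V} (p : G.Walk u v) :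
    visitCount w u t + 1 ≤ (δ + 1) ^ p.length * (visitCount w v t + 1) := by
  induction p with
  | nil => simp
  | @cons x y v hxy p ih =>
    calc visitCount w x t + 1
        ≤ δ * (visitCount w y t + 1) + 1 := by
          grw [hw.visitCount_le_degree_mul hxy t, hδ x]
      _ ≤ (δ + 1) * (visitCount w y t + 1) := by
          rw [add_one_mul]
          gcongr
          exact Nat.le_add_left 1 _
      _ ≤ (δ + 1) * ((δ + 1) ^ p.length * (visitCount w v t + 1)) := by gcongr
      _ = (δ + 1) ^ (p.cons hxy).length * (visitCount w v t + 1) := by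
          rw [SimpleGraph.Walk.length_cons, pow_succ', mul_assoc]

end IsLFVWalk

theorem lfv_v_frequency_upper_bound_general [G.LocallyFinite] (hw : IsLFVWalk G w) {δ : ℕ}
    (hδ : ∀ x, G.degree x ≤ δ) (t : ℕ) {u v : V} (huv : G.Reachable u v) :
    visitCount w u t + 1 ≤ (δ + 1) ^ G.dist u v * (visitCount w v t + 1) := by
  obtain ⟨p, hp⟩ := huv.exists_walk_length_eq_dist
  exact hp ▸ hw.visitCount_add_one_le_pow_length_mul hδ t p

end

/-- If `G` is a finite connected simple graph with maximum degree `δ` and diameter `d`,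
`w` is a walk on `G` following the LFV-v policy, and some vertex `v` is still unvisited
at time `t`, then every vertex has visit count at most `(δ + 1) ^ d` up to time `t`. -/
theorem lfv_v_frequency_upper_bound {V : Type*} [Fintype V] (G : SimpleGraph V)
    (hconn : G.Connected)
    -- `δ` is the maximum degree of `G`
    (δ : ℕ) (hδ : IsGreatest {k : ℕ | ∃ v : V, {u : V | G.Adj v u}.ncard = k} δ)
    -- `d` is the diameter of `G`
    (d : ℕ) (hd : IsGreatest {k : ℕ | ∃ u v : V, G.dist u v = k} d)
    (w : ℕ → V)
    -- `w` is a walk on `G`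
    (hwalk : ∀ t : ℕ, G.Adj (w t) (w (t + 1)))
    -- `w` follows the LFV-v policy
    (hpol : ∀ t : ℕ, ∀ u : V, G.Adj (w t) u →
      {t' : ℕ | t' ≤ t ∧ w t' = w (t + 1)}.ncard ≤ {t' : ℕ | t' ≤ t ∧ w t' = u}.ncard)
    (t : ℕ) (v : V)
    -- `v` is still unvisited at time `t`
    (hv : ∀ t' : ℕ, t' ≤ t → w t' ≠ v) :
    ∀ u : V, {t' : ℕ | t' ≤ t ∧ w t' = u}.ncard ≤ (δ + 1) ^ d := by
  classical
  intro u
  have hdeg (x : V) : G.degree x ≤ δ := by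
    rw [← G.card_neighborFinset_eq_degree, ← Set.ncard_coe_finset, G.coe_neighborFinset]
    exact hδ.2 ⟨x, rfl⟩
  have hbound := lfv_v_frequency_upper_bound_general ⟨hwalk, hpol⟩ hdeg t (hconn u v)
  rw [visitCount_eq_zero hv, zero_add, mul_one] at hbound
  exact (Nat.le_of_lt hbound).trans (Nat.pow_le_pow_right δ.succ_pos (hd.2 ⟨u, v, rfl⟩))
end

section
/- There exists a universal constant C > 0 such that the following holds for every constant a > 0. Let G be a finite connected simple graph with n ≥ 1 vertices, maximum degree at most 3, and diameter d with d ≤ a·√n, and let w be a walk on G following the LFV-e policy. Then every vertex of G has latency at most C·a·n^(3/2) under w: for every vertex v of G and every time t ∈ ℕ there exists t' with t ≤ t' ≤ t + C·a·n^(3/2) such that w(t') = v. -/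
/-!
Fix an even threshold `J` and cut all traversal counts off at `J`. The moves that still increase a
truncated count form a trail from some vertex `y` to the current position, so `y` and the current
position are the only vertices at which the truncated counts have odd sum. When the walk takes an
edge of count at least `J`, the LFV-e policy forces all edges at the current position to have count
at least `J`; the truncated counts there have even sum, so the trail was closed, and it restarts
at the endpoint of that move. Only such a move lifts a count above `J`, and the trail cannot restart
again before all counts at the new `y` have reached `J`. Hence, at a vertex with an edge of count
below `J`, no count exceeds `J + 1`, and choosing `J` just above the smaller count shows that two
edges sharing a vertex have counts differing by at most `3`.

While a vertex `v` goes unvisited, the counts of the edges at `v` are frozen, so the count of an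
edge at distance `k` from `v` grows by at most `6 * k`. Since every step increases one count, the
absence lasts for fewer than `6 * d * |E|` steps, where `d` bounds the distances to `v`.
-/

open Finset

variable {V : Type*}

/-- The traversal count `efreq_w(e, t)`: how often the walk `w` traverses `e` before time `t`. -/
noncomputable def traversalCount (w : ℕ → V) (e : Sym2 V) (t : ℕ) : ℕ :=
  {t' : ℕ | t' < t ∧ s(w t', w (t' + 1)) = e}.ncard

section traversalCount

variable {w : ℕ → V} {e : Sym2 V} {s t : ℕ}

theorem traversalCount_eq_count [DecidableEq V] (w : ℕ → V) (e : Sym2 V) (t : ℕ) :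
    traversalCount w e t = Nat.count (fun t' ↦ s(w t', w (t' + 1)) = e) t := by
  rw [Nat.count_eq_card_filter_range, ← Set.ncard_coe_finset, traversalCount]
  simp only [coe_filter, mem_range]

@[simp]
theorem traversalCount_zero (w : ℕ → V) (e : Sym2 V) : traversalCount w e 0 = 0 := by
  simp [traversalCount]

theorem traversalCount_succ [DecidableEq V] (w : ℕ → V) (e : Sym2 V) (t : ℕ) :
    traversalCount w e (t + 1) =
      traversalCount w e t + if s(w t, w (t + 1)) = e then 1 else 0 := by
  simp only [traversalCount_eq_count, Nat.count_succ]

theorem monotone_traversalCount (w : ℕ → V) (e : Sym2 V) : Monotone (traversalCount w e) := by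
  classical
  exact monotone_nat_of_le_succ fun t ↦ traversalCount_succ w e t ▸ Nat.le_add_right _ _

theorem traversalCount_eq_of_forall_ne {v : V} (hv : v ∈ e) (hst : s ≤ t)
    (h : ∀ r ∈ Set.Icc s t, w r ≠ v) : traversalCount w e t = traversalCount w e s := by
  classical
  induction t, hst using Nat.le_induction with
  | base => rfl
  | succ t hst ih =>
    have hne : s(w t, w (t + 1)) ≠ e := by
      rintro rfl
      rcases Sym2.mem_iff.mp hv with hv | hv
      · exact h t ⟨hst, t.le_succ⟩ hv.symm
      · exact h (t + 1) ⟨hst.trans t.le_succ, le_rfl⟩ hv.symm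
    rw [traversalCount_succ, if_neg hne, add_zero,
      ih fun r hr ↦ h r ⟨hr.1, hr.2.trans t.le_succ⟩]

theorem sum_traversalCount_edgeFinset {G : SimpleGraph V} [Fintype G.edgeSet]
    (hw : ∀ t, G.Adj (w t) (w (t + 1))) (t : ℕ) :
    ∑ e ∈ G.edgeFinset, traversalCount w e t = t := by
  classical
  induction t with
  | zero => simp only [traversalCount_zero, sum_const_zero]
  | succ t ih =>
    have hmem : s(w t, w (t + 1)) ∈ G.edgeFinset := SimpleGraph.mem_edgeFinset.mpr (hw t)
    simp only [traversalCount_succ, sum_add_distrib, ih, sum_ite_eq, if_pos hmem]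

end traversalCount

/-- `w` is a walk on `G` following the LFV-e (least-frequently-visited edge) policy. -/
structure IsLFVEWalk (G : SimpleGraph V) (w : ℕ → V) : Prop where
  adj (t : ℕ) : G.Adj (w t) (w (t + 1))
  le_of_adj (t : ℕ) (u : V) (hu : G.Adj (w t) u) :
    traversalCount w s(w t, w (t + 1)) t ≤ traversalCount w s(w t, u) t

theorem IsLFVEWalk.le_of_mem_incidenceSet {G : SimpleGraph V} {w : ℕ → V} {e : Sym2 V} {t : ℕ}
    (hw : IsLFVEWalk G w) (he : e ∈ G.incidenceSet (w t)) :
    traversalCount w s(w t, w (t + 1)) t ≤ traversalCount w e t := by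
  obtain ⟨u, rfl⟩ := Sym2.mem_iff_exists.mp he.2
  exact hw.le_of_adj t u he.1

/-- The degree of `v` in the multigraph in which each edge of `G` has as multiplicity its traversal
count before time `t`, truncated at `J`. -/
noncomputable def truncatedDegree [DecidableEq V] (G : SimpleGraph V) [G.LocallyFinite]
    (w : ℕ → V) (J t : ℕ) (v : V) : ℕ :=
  ∑ e ∈ G.incidenceFinset v, min (traversalCount w e t) J

section truncatedDegree

variable [DecidableEq V] {G : SimpleGraph V} [G.LocallyFinite] {w : ℕ → V} {J t : ℕ}

theorem truncatedDegree_succ_of_lt (hadj : G.Adj (w t) (w (t + 1)))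
    (hlt : traversalCount w s(w t, w (t + 1)) t < J) (v : V) :
    truncatedDegree G w J (t + 1) v = truncatedDegree G w J t v +
      ((if v = w t then 1 else 0) + if v = w (t + 1) then 1 else 0) := by
  have hmin (e : Sym2 V) : min (traversalCount w e (t + 1)) J =
      min (traversalCount w e t) J + if s(w t, w (t + 1)) = e then 1 else 0 := by
    rw [traversalCount_succ]
    split_ifs with he
    · subst he; omega
    · rfl
  have hne : w t ≠ w (t + 1) := hadj.ne
  simp only [truncatedDegree, hmin, sum_add_distrib, sum_ite_eq, SimpleGraph.mem_incidenceFinset,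
    SimpleGraph.mk'_mem_incidenceSet_iff, hadj, true_and]
  grind

theorem truncatedDegree_succ_of_le (hle : J ≤ traversalCount w s(w t, w (t + 1)) t) (v : V) :
    truncatedDegree G w J (t + 1) v = truncatedDegree G w J t v := by
  refine sum_congr rfl fun e _ ↦ ?_
  rw [traversalCount_succ]
  split_ifs with he
  · subst he; omega
  · rfl

end truncatedDegree

/-- `y` is the starting point of the trail formed by the latest moves along edges of count below
`J`, and `w t` is its end. As the trail may be closed, the oddness of the truncated degrees at its
two ends is expressed by adding one for each end. Among the vertices that still have an edge of
count below `J`, only `y` can have an edge of count above `J`, namely `J + 1`. -/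
structure IsTrailStart [DecidableEq V] (G : SimpleGraph V) [G.LocallyFinite]
    (w : ℕ → V) (J t : ℕ) (y : V) : Prop where
  even_truncatedDegree (v : V) :
    Even (truncatedDegree G w J t v + (if v = y then 1 else 0) + (if v = w t then 1 else 0))
  count_le {v : V} {e e' : Sym2 V} (he : e ∈ G.incidenceSet v) (he' : e' ∈ G.incidenceSet v)
    (hlt : traversalCount w e' t < J) : traversalCount w e t ≤ J + if v = y then 1 else 0

namespace IsTrailStart

variable [DecidableEq V] {G : SimpleGraph V} [G.LocallyFinite] {w : ℕ → V} {J t : ℕ} {y : V}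

variable (G w J) in
theorem zero : IsTrailStart G w J 0 (w 0) where
  even_truncatedDegree v := by
    simp only [truncatedDegree, traversalCount_zero, zero_min, sum_const_zero, zero_add,
      Even.add_self]
  count_le _ _ _ := by simp only [traversalCount_zero, zero_le]

theorem succ_of_lt (hy : IsTrailStart G w J t y) (hadj : G.Adj (w t) (w (t + 1)))
    (hlt : traversalCount w s(w t, w (t + 1)) t < J) :
    IsTrailStart G w J (t + 1) y where
  even_truncatedDegree v := by
    have hcong : truncatedDegree G w J (t + 1) v + (if v = y then 1 else 0) +
          (if v = w (t + 1) then 1 else 0) =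
        truncatedDegree G w J t v + (if v = y then 1 else 0) + (if v = w t then 1 else 0) +
          2 * (if v = w (t + 1) then 1 else 0) := by
      rw [truncatedDegree_succ_of_lt hadj hlt]
      ring
    exact hcong ▸ (hy.even_truncatedDegree v).add (even_two_mul _)
  count_le {_ e _} he he' hlt' := by
    have hle := hy.count_le he he' ((monotone_traversalCount w _ t.le_succ).trans_lt hlt')
    rw [traversalCount_succ]
    by_cases heq : s(w t, w (t + 1)) = e
    · subst heq
      rw [if_pos rfl]
      omega
    · rwa [if_neg heq]

theorem eq_of_le (hy : IsTrailStart G w J t y) (hw : IsLFVEWalk G w) (hJ : Even J)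
    (hle : J ≤ traversalCount w s(w t, w (t + 1)) t) : w t = y := by
  have heven : Even (truncatedDegree G w J t (w t)) := by
    refine even_sum _ fun e he ↦ ?_
    rw [SimpleGraph.mem_incidenceFinset] at he
    rwa [min_eq_right (hle.trans (hw.le_of_mem_incidenceSet he))]
  by_contra hne
  have hodd := hy.even_truncatedDegree (w t)
  rw [if_neg hne, if_pos rfl, add_zero] at hodd
  exact Nat.even_add_one.mp hodd heven

theorem succ_of_le (hy : IsTrailStart G w J t y) (hw : IsLFVEWalk G w) (hJ : Even J)
    (hle : J ≤ traversalCount w s(w t, w (t + 1)) t) :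
    IsTrailStart G w J (t + 1) (w (t + 1)) where
  even_truncatedDegree v := by
    have heven : Even (truncatedDegree G w J t v) := by
      have h := hy.even_truncatedDegree v
      rw [hy.eq_of_le hw hJ hle, add_assoc] at h
      exact (Nat.even_add.mp h).mpr (Even.add_self _)
    rw [truncatedDegree_succ_of_le hle, add_assoc]
    exact heven.add (Even.add_self _)
  count_le {v e e'} he he' hlt' := by
    have hlt := (monotone_traversalCount w e' t.le_succ).trans_lt hlt'
    have hv : v ≠ w t := by
      rintro rfl
      exact hlt.not_ge (hle.trans (hw.le_of_mem_incidenceSet he'))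
    have hcount := hy.count_le he he' hlt
    rw [if_neg (hy.eq_of_le hw hJ hle ▸ hv)] at hcount
    rw [traversalCount_succ]
    split_ifs with heq hv' hv'
    · omega
    · subst heq
      exact absurd (Sym2.mem_iff.mp he.2) (not_or.mpr ⟨hv, hv'⟩)
    all_goals omega

end IsTrailStart

namespace IsLFVEWalk

variable {G : SimpleGraph V} [G.LocallyFinite] {w : ℕ → V} {e e' : Sym2 V} {u v : V} {J d t : ℕ}

theorem exists_isTrailStart [DecidableEq V] (hw : IsLFVEWalk G w) (hJ : Even J) (t : ℕ) :
    ∃ y, IsTrailStart G w J t y := by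
  induction t with
  | zero => exact ⟨w 0, IsTrailStart.zero G w J⟩
  | succ t ih =>
    obtain ⟨y, hy⟩ := ih
    rcases lt_or_ge (traversalCount w s(w t, w (t + 1)) t) J with hlt | hle
    · exact ⟨y, hy.succ_of_lt (hw.adj t) hlt⟩
    · exact ⟨w (t + 1), hy.succ_of_le hw hJ hle⟩

theorem traversalCount_le_add_three (hw : IsLFVEWalk G w) (he : e ∈ G.incidenceSet v)
    (he' : e' ∈ G.incidenceSet v) (t : ℕ) :
    traversalCount w e t ≤ traversalCount w e' t + 3 := by
  classical
  obtain ⟨J, hJ, hlt, hJ_le⟩ :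
      ∃ J, Even J ∧ traversalCount w e' t < J ∧ J ≤ traversalCount w e' t + 2 :=
    ⟨2 * (traversalCount w e' t / 2 + 1), even_two_mul _, by omega, by omega⟩
  obtain ⟨y, hy⟩ := hw.exists_isTrailStart hJ t
  calc traversalCount w e t ≤ J + if v = y then 1 else 0 := hy.count_le he he' hlt
    _ ≤ J + 1 := by split_ifs <;> omega
    _ ≤ traversalCount w e' t + 3 := by omega

theorem exists_traversalCount_near (hw : IsLFVEWalk G w) (p : G.Walk u v)
    (he : e ∈ G.incidenceSet u) :
    ∃ e' ∈ G.incidenceSet v, ∀ t,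
      traversalCount w e t ≤ traversalCount w e' t + 3 * p.length ∧
        traversalCount w e' t ≤ traversalCount w e t + 3 * p.length := by
  induction p generalizing e with
  | nil => exact ⟨e, he, fun t ↦ ⟨le_self_add, le_self_add⟩⟩
  | cons huv p ih =>
    obtain ⟨e', he', hnear⟩ := ih (G.mk'_mem_incidenceSet_right_iff.mpr huv)
    refine ⟨e', he', fun t ↦ ?_⟩
    have huv' := G.mk'_mem_incidenceSet_left_iff.mpr huv
    have hle := hw.traversalCount_le_add_three he huv' t
    have hge := hw.traversalCount_le_add_three huv' he t
    have := hnear t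
    rw [SimpleGraph.Walk.length_cons]
    omega

theorem traversalCount_le_of_forall_ne (hw : IsLFVEWalk G w) (huv : G.Reachable u v)
    (he : e ∈ G.incidenceSet u) {s : ℕ} (hst : s ≤ t) (h : ∀ r ∈ Set.Icc s t, w r ≠ v) :
    traversalCount w e t ≤ traversalCount w e s + 6 * G.dist u v := by
  obtain ⟨p, hp⟩ := huv.exists_walk_length_eq_dist
  obtain ⟨e', he', hnear⟩ := hw.exists_traversalCount_near p he
  calc traversalCount w e t
      ≤ traversalCount w e' t + 3 * G.dist u v := hp ▸ (hnear t).1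
    _ = traversalCount w e' s + 3 * G.dist u v := by
      rw [traversalCount_eq_of_forall_ne he'.2 hst h]
    _ ≤ traversalCount w e s + 3 * G.dist u v + 3 * G.dist u v := by
      gcongr
      exact hp ▸ (hnear s).2
    _ = traversalCount w e s + 6 * G.dist u v := by ring

theorem exists_visit [Fintype G.edgeSet] (hw : IsLFVEWalk G w) (hG : G.Connected)
    (hd : ∀ u, G.dist u v ≤ d) (t : ℕ) :
    ∃ t' ∈ Set.Icc t (t + 6 * d * #G.edgeFinset), w t' = v := by
  by_contra! hcon
  have : Nontrivial V := ⟨_, _, (hw.adj 0).ne⟩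
  obtain ⟨u, hvu⟩ := hG.preconnected.exists_adj_of_nontrivial v
  have hd_pos : 0 < d := by
    have := hd u
    rw [SimpleGraph.dist_eq_one_iff_adj.mpr hvu.symm] at this
    omega
  set s := t + 6 * d * #G.edgeFinset with hs
  have hts : t ≤ s := Nat.le_add_right _ _
  have hsum : ∑ e ∈ G.edgeFinset, traversalCount w e s <
      ∑ e ∈ G.edgeFinset, (traversalCount w e t + 6 * d) := by
    refine sum_lt_sum (fun e he ↦ ?_) ⟨s(v, u), SimpleGraph.mem_edgeFinset.mpr hvu, ?_⟩
    · induction e with | _ x y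
      have hx := G.mk'_mem_incidenceSet_left_iff.mpr (SimpleGraph.mem_edgeFinset.mp he)
      exact (hw.traversalCount_le_of_forall_ne (hG x v) hx hts hcon).trans
        (by gcongr; exact hd x)
    · rw [traversalCount_eq_of_forall_ne (Sym2.mem_mk_left v u) hts hcon]
      omega
  rw [sum_add_distrib, sum_const, sum_traversalCount_edgeFinset hw.adj,
    sum_traversalCount_edgeFinset hw.adj, smul_eq_mul, mul_comm #_] at hsum
  exact hsum.ne hs

end IsLFVEWalk

theorem two_mul_card_edgeFinset_le [Fintype V] {G : SimpleGraph V} [DecidableRel G.Adj] {Δ : ℕ}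
    (hdeg : ∀ v, G.degree v ≤ Δ) : 2 * #G.edgeFinset ≤ Fintype.card V * Δ :=
  calc 2 * #G.edgeFinset = ∑ v, G.degree v := G.sum_degrees_eq_twice_card_edges.symm
    _ ≤ Fintype.card V * Δ := sum_le_card_nsmul _ _ _ fun v _ ↦ hdeg v

theorem lfv_e_vertex_latency_small_diameter_general [Fintype V] {G : SimpleGraph V}
    (hG : G.Connected) {Δ d : ℕ} {a : ℝ} {w : ℕ → V} {v : V}
    (hdeg : ∀ u, (G.neighborSet u).ncard ≤ Δ) (hd : ∀ u, G.dist u v ≤ d)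
    (hda : d ≤ a * √(Fintype.card V)) (hw : IsLFVEWalk G w) (t : ℕ) :
    ∃ t' : ℕ, t ≤ t' ∧
      (t' : ℝ) ≤ t + 3 * Δ * a * (Fintype.card V : ℝ) ^ ((3 : ℝ) / 2) ∧ w t' = v := by
  classical
  obtain ⟨t', ⟨htt', ht'⟩, hv⟩ := hw.exists_visit hG hd t
  refine ⟨t', htt', ?_, hv⟩
  have hedges : 2 * #G.edgeFinset ≤ Fintype.card V * Δ :=
    two_mul_card_edgeFinset_le fun u ↦ by
      rw [← G.card_neighborSet_eq_degree, ← Nat.card_eq_fintype_card]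
      exact hdeg u
  have hpow : (Fintype.card V : ℝ) ^ ((3 : ℝ) / 2) = Fintype.card V * √(Fintype.card V) := by
    rw [Real.sqrt_eq_rpow, ← Real.rpow_one_add' (Nat.cast_nonneg _) (by norm_num)]
    norm_num
  calc (t' : ℝ) ≤ t + 3 * d * (2 * #G.edgeFinset) := by
        exact_mod_cast ht'.trans_eq (by ring)
    _ ≤ t + 3 * (a * √(Fintype.card V)) * (Fintype.card V * Δ) := by
        have hedges' : (2 * #G.edgeFinset : ℝ) ≤ Fintype.card V * Δ := mod_cast hedges
        have hbound_nonneg : 0 ≤ a * √(Fintype.card V) := (Nat.cast_nonneg d).trans hda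
        gcongr (t : ℝ) + 3 * ?_ * ?_
    _ = t + 3 * Δ * a * (Fintype.card V : ℝ) ^ ((3 : ℝ) / 2) := by
        rw [hpow]
        ring

/-- There is a universal constant `C > 0` such that for every `a > 0` and every finite
connected simple graph `G` on `n ≥ 1` vertices with maximum degree at most `3` and
diameter `d ≤ a * √n`, and every walk `w` on `G` following the LFV-e policy, every vertex
of `G` is visited in every time window of length `C * a * n ^ (3 / 2)`. -/
theorem lfv_e_vertex_latency_small_diameter :
    ∃ C : ℝ, 0 < C ∧
      ∀ a : ℝ, 0 < a →
      ∀ (V : Type) [Fintype V] (G : SimpleGraph V), G.Connected →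
        ∀ n : ℕ, n = Fintype.card V → 1 ≤ n →
        (∀ v : V, {u : V | G.Adj v u}.ncard ≤ 3) →
        -- `d` is the diameter of `G`, with `d ≤ a * √n`
        ∀ d : ℕ, IsGreatest {k : ℕ | ∃ u v : V, G.dist u v = k} d →
          (d : ℝ) ≤ a * Real.sqrt n →
        ∀ w : ℕ → V,
          -- `w` is a walk on `G`
          (∀ t : ℕ, G.Adj (w t) (w (t + 1))) →
          -- `w` follows the LFV-e policy
          (∀ t : ℕ, ∀ u : V, G.Adj (w t) u →
            {t' : ℕ | t' < t ∧ s(w t', w (t' + 1)) = s(w t, w (t + 1))}.ncard ≤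
              {t' : ℕ | t' < t ∧ s(w t', w (t' + 1)) = s(w t, u)}.ncard) →
          ∀ v : V, ∀ t : ℕ,
            ∃ t' : ℕ, t ≤ t' ∧
              (t' : ℝ) ≤ (t : ℝ) + C * a * (n : ℝ) ^ ((3 : ℝ) / 2) ∧ w t' = v := by
  refine ⟨3 * (3 : ℕ), by norm_num, ?_⟩
  rintro a - V _ G hG _ rfl - hdeg d hd hda w hadj hlfv v t
  exact lfv_e_vertex_latency_small_diameter_general hG hdeg (fun u ↦ hd.2 ⟨u, v, rfl⟩) hda
    ⟨hadj, hlfv⟩ t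
end
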